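/- For every complex number s with Re s > 1, the following functional relation between the zeta-function of the root system C₂ and the Riemann zeta function holds: ζ₂(s+1,3,1,1; C₂) − ζ₂(s+1,1,3,1; C₂) + ζ₂(1,1,3,s+1; C₂) − ζ₂(1,3,1,s+1; C₂) = −π²·ζ(s+4) + (10 + 2^{−s−1})·ζ(s+6). -/

import Mathlib

open Complex

/-- The zeta-function of the root system `C₂` with complex exponents:
`ζ₂(s₁,s₂,s₃,s₄;C₂) = ∑_{m,n ≥ 1} 1/(m^{s₁} n^{s₂} (m+n)^{s₃} (m+2n)^{s₄})`. -/
noncomputable def zetaC2 (s₁ s₂ s₃ s₄ : ℂ) : ℂ :=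
  ∑' (m : ℕ+) (n : ℕ+),
    1 / (((m : ℕ) : ℂ) ^ s₁ * ((n : ℕ) : ℂ) ^ s₂ * (((m : ℕ) : ℂ) + ((n : ℕ) : ℂ)) ^ s₃ *
      (((m : ℕ) : ℂ) + 2 * ((n : ℕ) : ℂ)) ^ s₄)

/-!
For a fixed `N ≥ 1`, sum `1 / (n³ (N + n) (N + 2 n))` over all integers `n` that are not poles. By
partial fractions the value is `-π² / N³ + 10 / N⁵`, plus `32 / N⁵` if `N` is even, since then the
pole `-N / 2` is an integer. On the other hand, fold the integers along `n ↦ -N - n`. The integers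
outside `[-N, 0]` give summands in which `N` plays the role of `m`, those inside give summands in
which `N` plays the role of `m + 2 n`. Multiplying by `N ^ (-s - 1)` and summing over `N` yields
the relation.
-/

open Filter Topology

section Series

variable {E : Type*} [AddCommGroup E]

lemma hasSum_zero_of_odd {α : Type*} [InvolutiveNeg α] [TopologicalSpace E]
    [IsTopologicalAddGroup E] [T2Space E] [IsAddTorsionFree E] {f : α → E}
    (hodd : f.Odd) (hf : Summable f) : HasSum f 0 := by
  have hneg : HasSum f (-∑' n, f n) := by
    simpa [Function.comp_def, hodd _] using ((Equiv.neg α).hasSum_iff.2 hf.hasSum).neg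
  simpa [self_eq_neg.1 (hf.hasSum.unique hneg)] using hf.hasSum

lemma hasSum_int_sub_add_one [TopologicalSpace E] [IsTopologicalAddGroup E] [T2Space E]
    {f : ℤ → E} {a b : E} (hbot : Tendsto f atBot (𝓝 a)) (htop : Tendsto f atTop (𝓝 b))
    (hsum : Summable fun n ↦ f n - f (n + 1)) : HasSum (fun n ↦ f n - f (n + 1)) (a - b) := by
  have hpartial : HasSum (fun n ↦ f n - f (n + 1)) (a - b) (SummationFilter.symmetricIco ℤ) := by
    simp only [SummationFilter.hasSum_symmetricIco_int_iff, Finset.sum_Ico_int_sub]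
    exact (hbot.comp (tendsto_neg_atTop_atBot.comp tendsto_natCast_atTop_atTop)).sub
      (htop.comp tendsto_natCast_atTop_atTop)
  have hsymm : HasSum (fun n ↦ f n - f (n + 1)) (∑' n, (f n - f (n + 1)))
      (SummationFilter.symmetricIco ℤ) :=
    hsum.hasSum.mono_left SummationFilter.LeAtTop.le_atTop
  exact hpartial.unique hsymm ▸ hsum.hasSum

lemma hasSum_pnat_add_neg [TopologicalSpace E] [IsTopologicalAddGroup E] {f : ℤ → E} {a : E}
    (hf : HasSum f a) (hzero : f 0 = 0) : HasSum (fun n : ℕ+ ↦ f n + f (-n)) a :=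
  (hasSum_pnat_iff (f := fun n : ℕ ↦ f n + f (-n))).2 (by simpa [hzero] using hf.nat_add_neg)

variable [UniformSpace E] [IsUniformAddGroup E] [CompleteSpace E] [T2Space E]

lemma hasSum_int_reflect (N : ℤ) {f : ℤ → E} {a : E} (hf : HasSum f a)
    (hmid : ∀ n, 2 * n + N = 0 → f n = 0) :
    HasSum (fun n : ℤ ↦ if 0 < 2 * n + N then f n + f (-N - n) else 0) a := by
  have hright := (hf.summable.indicator {n : ℤ | 0 < 2 * n + N}).hasSum
  have hleft := (hf.summable.indicator {n : ℤ | 2 * n + N < 0}).hasSum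
  have hsplit : ∀ n, f n = {n : ℤ | 0 < 2 * n + N}.indicator f n +
      {n : ℤ | 2 * n + N < 0}.indicator f n := by
    intro n
    rcases lt_trichotomy (2 * n + N) 0 with h | h | h
    · simp [h, h.not_gt]
    · simp [h, hmid n h]
    · simp [h, h.not_gt]
  rw [hf.unique ((hright.add hleft).congr_fun hsplit)]
  refine (hright.add ((Equiv.subLeft (-N)).hasSum_iff.2 hleft)).congr_fun fun n ↦ ?_
  have hmem : 2 * (-N - n) + N < 0 ↔ 0 < 2 * n + N := by lia
  by_cases hn : 0 < 2 * n + N <;> simp [hmem, hn]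

lemma hasSum_pnat_reflect (N : ℕ+) {f : ℤ → E} {a : E} (hf : HasSum f a) (hzero : f 0 = 0)
    (hneg : f (-N) = 0) (hmid : ∀ n : ℤ, 2 * n + N = 0 → f n = 0) :
    HasSum (fun n : ℕ+ ↦ f n + f (-N - n) + if 2 * n < N then f (-n) + f (n - N) else 0) a := by
  have hfold := hasSum_pnat_add_neg (hasSum_int_reflect N hf hmid) (by simp [hzero, hneg])
  refine hfold.congr_fun fun n ↦ ?_
  have hlt : 0 < 2 * -(n : ℤ) + N ↔ 2 * n < N := by
    rw [← PNat.coe_lt_coe, PNat.mul_coe, PNat.val_ofNat]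
    lia
  have hpos : 0 < 2 * (n : ℤ) + N := by positivity
  rw [if_pos hpos]
  simp only [hlt, sub_neg_eq_add, neg_add_eq_sub]

end Series

section Reindexing

variable {E : Type*} [AddCommMonoid E] [TopologicalSpace E]

lemma hasSum_ite_even_iff {f : ℕ+ → E} {a : E} :
    HasSum (fun n : ℕ+ ↦ if Even (n : ℕ) then f n else 0) a ↔ HasSum (fun n ↦ f (2 * n)) a := by
  have hinj : Function.Injective fun n : ℕ+ ↦ 2 * n := mul_right_injective 2
  rw [← hinj.hasSum_iff]
  · simp [Function.comp_def]
  · intro n hn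
    refine if_neg fun heven ↦ hn ?_
    obtain ⟨k, hk⟩ := even_iff_two_dvd.1 heven
    exact ⟨⟨k, by have := n.pos; lia⟩, PNat.eq hk.symm⟩

lemma hasSum_ite_two_mul_lt_iff {f : ℕ+ × ℕ+ → E} {a : E} :
    HasSum (fun p ↦ if 2 * p.2 < p.1 then f p else 0) a ↔
      HasSum (fun p : ℕ+ × ℕ+ ↦ f (p.1 + 2 * p.2, p.2)) a := by
  have hinj : Function.Injective fun p : ℕ+ × ℕ+ ↦ (p.1 + 2 * p.2, p.2) := by
    rintro ⟨m, n⟩ ⟨m', n'⟩ h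
    obtain ⟨hm, rfl⟩ := Prod.mk.inj h
    exact Prod.ext (add_right_cancel hm) rfl
  rw [← hinj.hasSum_iff]
  · simp [Function.comp_def, PNat.lt_add_left]
  · rintro ⟨N, n⟩ hp
    refine if_neg fun hlt ↦ hp ⟨(N - 2 * n, n), ?_⟩
    simp [PNat.sub_add_of_lt hlt]

end Reindexing

lemma hasSum_int_one_div_sub_one_div_add_one :
    HasSum (fun n : ℤ ↦ (1 : ℂ) / n - 1 / (n + 1)) 0 := by
  have hsum : Summable fun n : ℤ ↦ (1 : ℂ) / n - 1 / (n + 1) := by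
    have hprod := EisensteinSeries.summable_linear_right_add_one_mul_linear_right 0 0 0
    rw [← Finset.summable_compl_iff (s := {0, -1})] at hprod ⊢
    refine hprod.congr fun ⟨n, hn⟩ ↦ ?_
    have h0 : (n : ℂ) ≠ 0 := by
      exact_mod_cast fun h : n = 0 ↦ hn (by simp [h])
    have h1 : (n : ℂ) + 1 ≠ 0 := by
      exact_mod_cast fun h : n + 1 = 0 ↦ hn (by simp [eq_neg_of_add_eq_zero_left h])
    simp only [Int.cast_zero, mul_zero, zero_add, one_div, mul_inv_rev]
    field_simp
    ring
  have hinv := tendsto_inv₀_cobounded (α := ℂ)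
  simpa using hasSum_int_sub_add_one (hinv.comp tendsto_intCast_atBot_cobounded)
    (hinv.comp tendsto_intCast_atTop_cobounded) (by simpa using hsum)

lemma hasSum_int_one_div_sub_one_div_add_nat (k : ℕ) :
    HasSum (fun n : ℤ ↦ (1 : ℂ) / n - 1 / (n + k)) 0 := by
  induction k with
  | zero => simp
  | succ k ih =>
    have hshift := (Equiv.addRight (k : ℤ)).hasSum_iff.2 hasSum_int_one_div_sub_one_div_add_one
    simpa [Function.comp_def, add_assoc] using ih.add hshift

lemma hasSum_int_one_div_sub_two_div_two_mul_add_nat (k : ℕ) :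
    HasSum (fun n : ℤ ↦ (1 : ℂ) / n - 2 / (2 * n + k)) 0 := by
  have hdiff := hasSum_int_one_div_sub_one_div_add_nat k
  have hsum : Summable fun n : ℤ ↦ (1 : ℂ) / n - 2 / (2 * n + k) := by
    have hdouble : Function.Injective fun n : ℤ ↦ 2 * n := mul_right_injective₀ two_ne_zero
    refine ((hdiff.summable.comp_injective hdouble).mul_left 2).congr fun n ↦ ?_
    simp only [one_div, Function.comp_apply, Int.cast_mul, Int.cast_ofNat, mul_inv_rev]
    ring
  have hreflect := (Equiv.subLeft (-(k : ℤ))).hasSum_iff.2 hsum.hasSum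
  have htwice := (hsum.hasSum.add hreflect).congr_fun
    (g := fun n : ℤ ↦ (1 : ℂ) / n - 1 / (n + k)) fun n ↦ by
      have hmid : (2 : ℂ) * (-k - n) + k = -(2 * n + k) := by ring
      have hend : -(k : ℂ) - n = -(n + k) := by ring
      simp only [Function.comp_apply, Equiv.subLeft_apply]
      push_cast
      rw [hmid, hend, div_neg, div_neg]
      ring
  exact add_self_eq_zero.1 (htwice.unique hdiff) ▸ hsum.hasSum

lemma hasSum_int_one_div_cube : HasSum (fun n : ℤ ↦ (1 : ℂ) / n ^ 3) 0 := by
  refine hasSum_zero_of_odd (fun n ↦ ?_) ?_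
  · simp [Odd.neg_pow (by decide : Odd 3), inv_neg]
  · simpa using Complex.summable_ofReal.2
      ((Real.summable_one_div_int_pow (p := 3)).2 (by norm_num))

lemma hasSum_int_one_div_sq :
    HasSum (fun n : ℤ ↦ (1 : ℂ) / n ^ 2) ((Real.pi : ℂ) ^ 2 / 3) := by
  have hnat : HasSum (fun n : ℕ ↦ (1 : ℂ) / n ^ 2) ((Real.pi : ℂ) ^ 2 / 6) := by
    simpa using Complex.hasSum_ofReal.2 hasSum_zeta_two
  have hfull := HasSum.of_nat_of_neg (f := fun n : ℤ ↦ (1 : ℂ) / n ^ 2)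
    (by simpa using hnat) (by simpa using hnat)
  have hvalue : (Real.pi : ℂ) ^ 2 / 6 + (Real.pi : ℂ) ^ 2 / 6 - 1 / ((0 : ℤ) : ℂ) ^ 2 =
      (Real.pi : ℂ) ^ 2 / 3 := by
    rw [Int.cast_zero, zero_pow two_ne_zero, div_zero]
    ring
  rwa [hvalue] at hfull

/-- The rational function `1 / (x³ (a + x) (a + 2x))` whose values at `a = N`, `x = n` are summed in
two ways. It takes the junk value `0` at its poles, so that summing it over all integers amounts to
summing over those that are not poles. -/
def c2Kernel {K : Type*} [Field K] (a x : K) : K := 1 / (x ^ 3 * (a + x) * (a + 2 * x))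

section Kernel

variable {K : Type*} [Field K]

lemma c2Kernel_neg_sub (a x : K) :
    c2Kernel a (-a - x) = -(1 / (x * (a + x) ^ 3 * (a + 2 * x))) := by
  rw [c2Kernel, ← one_div_neg_eq_neg_one_div]
  ring_nf

lemma c2Kernel_add_two_mul_neg (a x : K) :
    c2Kernel (a + 2 * x) (-x) = -(1 / (a * x ^ 3 * (a + x))) := by
  rw [c2Kernel, ← one_div_neg_eq_neg_one_div]
  ring_nf

lemma c2Kernel_add_two_mul_sub (a x : K) :
    c2Kernel (a + 2 * x) (x - (a + 2 * x)) = 1 / (a * x * (a + x) ^ 3) := by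
  rw [c2Kernel]
  ring_nf

/-- The last three terms compensate for the junk value `0` of `c2Kernel` at its poles. -/
lemma c2Kernel_eq_partialFractions [DecidableEq K] {a : K} (ha : a ≠ 0) (x : K) :
    c2Kernel a x = 1 / a ^ 2 * (1 / x ^ 3) + -3 / a ^ 3 * (1 / x ^ 2) +
      -1 / a ^ 4 * (1 / x - 1 / (x + a)) + 8 / a ^ 4 * (1 / x - 2 / (2 * x + a)) +
      (if x = 0 then 15 / a ^ 5 else 0) + (if x = -a then -5 / a ^ 5 else 0) +
      (if 2 * x + a = 0 then 32 / a ^ 5 else 0) := by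
  rw [c2Kernel]
  rcases eq_or_ne x 0 with rfl | hx
  · have hneg : (0 : K) ≠ -a := (neg_ne_zero.2 ha).symm
    have hmid : 2 * 0 + a ≠ 0 := by simpa using ha
    rw [if_pos rfl, if_neg hneg, if_neg hmid]
    simp only [ne_eq, OfNat.ofNat_ne_zero, not_false_eq_true, zero_pow, add_zero, zero_mul,
      mul_zero, div_zero, one_div, zero_add, zero_sub, mul_neg]
    field_simp
    ring
  rcases eq_or_ne x (-a) with rfl | hxa
  · have hmid : 2 * -a + a = -a := by ring
    rw [if_neg hx, if_pos rfl, hmid, if_neg hx]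
    simp only [add_neg_cancel, mul_zero, mul_neg, zero_mul, div_zero, one_div, even_two,
      Even.neg_pow, inv_neg, neg_add_cancel, sub_zero, add_zero]
    field_simp
    ring
  rw [if_neg hx, if_neg hxa]
  by_cases hmid : 2 * x + a = 0
  · obtain rfl : a = -(2 * x) := eq_neg_of_add_eq_zero_right hmid
    have htwo : (2 : K) ≠ 0 := left_ne_zero_of_mul (neg_ne_zero.1 ha)
    have hend : x + -(2 * x) = -x := by ring
    rw [if_pos hmid, hmid, hend]
    simp only [neg_add_cancel, mul_zero, div_zero, even_two, Even.neg_pow, one_div, inv_neg,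
      sub_neg_eq_add, sub_zero, add_zero]
    field_simp
    ring
  · have hxa' : a + x ≠ 0 := fun h ↦ hxa (eq_neg_of_add_eq_zero_right h)
    have hmid' : a + x * 2 ≠ 0 := by rwa [mul_comm, add_comm]
    rw [if_neg hmid, add_comm x a, add_comm (2 * x) a]
    field_simp
    ring

end Kernel

lemma hasSum_int_c2Kernel {N : ℕ} (hN : N ≠ 0) :
    HasSum (fun n : ℤ ↦ c2Kernel (N : ℂ) n)
      (-(Real.pi : ℂ) ^ 2 / N ^ 3 + 10 / N ^ 5 + if Even N then 32 / (N : ℂ) ^ 5 else 0) := by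
  have hpole : ∀ (c : ℂ) (n₀ : ℤ), HasSum (fun n : ℤ ↦ if (n : ℂ) = n₀ then c else 0) c := by
    intro c n₀
    simpa using hasSum_ite_eq n₀ c
  have hmidpole : HasSum (fun n : ℤ ↦ if 2 * (n : ℂ) + N = 0 then 32 / (N : ℂ) ^ 5 else 0)
      (if Even N then 32 / (N : ℂ) ^ 5 else 0) := by
    have hcast : ∀ n : ℤ, 2 * (n : ℂ) + N = 0 ↔ 2 * n + N = 0 := fun n ↦ by norm_cast
    simp only [hcast]
    split_ifs with heven
    · obtain ⟨k, hk⟩ := heven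
      have hroot : ∀ n : ℤ, 2 * n + N = 0 ↔ n = -k := by lia
      simpa only [hroot] using hasSum_ite_eq (-k : ℤ) (32 / (N : ℂ) ^ 5)
    · have hroot : ∀ n : ℤ, 2 * n + N ≠ 0 := fun n hn ↦ heven ⟨n.natAbs, by lia⟩
      simpa only [hroot, if_false] using hasSum_zero
  have hN' : (N : ℂ) ≠ 0 := Nat.cast_ne_zero.2 hN
  have hsum := ((((((hasSum_int_one_div_cube.mul_left (1 / (N : ℂ) ^ 2)).add
    (hasSum_int_one_div_sq.mul_left (-3 / (N : ℂ) ^ 3))).add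
    ((hasSum_int_one_div_sub_one_div_add_nat N).mul_left (-1 / (N : ℂ) ^ 4))).add
    ((hasSum_int_one_div_sub_two_div_two_mul_add_nat N).mul_left (8 / (N : ℂ) ^ 4))).add
    (hpole (15 / (N : ℂ) ^ 5) 0)).add (hpole (-5 / (N : ℂ) ^ 5) (-N))).add hmidpole
  have hvalue : 1 / (N : ℂ) ^ 2 * 0 + -3 / (N : ℂ) ^ 3 * ((Real.pi : ℂ) ^ 2 / 3) +
      -1 / (N : ℂ) ^ 4 * 0 + 8 / (N : ℂ) ^ 4 * 0 + 15 / (N : ℂ) ^ 5 + -5 / (N : ℂ) ^ 5 =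
      -(Real.pi : ℂ) ^ 2 / N ^ 3 + 10 / N ^ 5 := by ring
  rw [← hvalue]
  exact hsum.congr_fun fun n ↦ by simpa using c2Kernel_eq_partialFractions hN' (n : ℂ)

lemma hasSum_pnat_c2Kernel (N : ℕ+) :
    HasSum (fun n : ℕ+ ↦ c2Kernel (N : ℂ) n + c2Kernel (N : ℂ) (-N - n) +
        if 2 * n < N then c2Kernel (N : ℂ) (-n) + c2Kernel (N : ℂ) (n - N) else 0)
      (-(Real.pi : ℂ) ^ 2 / N ^ 3 + 10 / N ^ 5 +
        if Even (N : ℕ) then 32 / (N : ℂ) ^ 5 else 0) := by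
  have hmid : ∀ n : ℤ, 2 * n + (N : ℤ) = 0 → c2Kernel (N : ℂ) n = 0 := by
    intro n hn
    have hn' : (N : ℂ) + 2 * n = 0 := by
      rw [add_comm]
      exact_mod_cast hn
    simp [c2Kernel, hn']
  simpa using hasSum_pnat_reflect N (hasSum_int_c2Kernel N.ne_zero) (by simp [c2Kernel])
    (by simp [c2Kernel]) hmid

/-- The summand of `zetaC2` at `(m, n) = p`, as a function on pairs: unconditional sums over pairs
can be rearranged, unlike the iterated sums in `zetaC2`. -/
noncomputable def zetaC2Term (s₁ s₂ s₃ s₄ : ℂ) (p : ℕ+ × ℕ+) : ℂ :=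
  1 / ((p.1 : ℂ) ^ s₁ * (p.2 : ℂ) ^ s₂ * ((p.1 : ℂ) + p.2) ^ s₃ * ((p.1 : ℂ) + 2 * p.2) ^ s₄)

section ZetaC2

lemma hasSum_zetaC2Term {s₁ s₂ s₃ s₄ : ℂ} (h : Summable (zetaC2Term s₁ s₂ s₃ s₄)) :
    HasSum (zetaC2Term s₁ s₂ s₃ s₄) (zetaC2 s₁ s₂ s₃ s₄) := by
  have htsum : zetaC2 s₁ s₂ s₃ s₄ = ∑' p, zetaC2Term s₁ s₂ s₃ s₄ p := h.tsum_prod.symm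
  exact htsum ▸ h.hasSum

variable {s : ℂ}

lemma summable_one_div_cpow_mul (hs : -1 < s.re) {C : ℕ} {x d : ℕ → ℕ → ℕ}
    (hx : ∀ m n, m ≤ x m n) (hd : ∀ m n, 0 < m → 0 < n → x m n ^ 2 * n ^ 2 ≤ C * d m n) :
    Summable fun p : ℕ+ × ℕ+ ↦ 1 / ((x p.1 p.2 : ℂ) ^ s * d p.1 p.2) := by
  have hm : Summable fun m : ℕ+ ↦ C / (m : ℝ) ^ (s.re + 2) := by
    have h := (Real.summable_one_div_nat_rpow.2 (by linarith : 1 < s.re + 2)).mul_left (C : ℝ)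
    simpa [Function.comp_def, div_eq_mul_inv] using h.comp_injective PNat.coe_injective
  have hn : Summable fun n : ℕ+ ↦ 1 / (n : ℝ) ^ 2 :=
    (Real.summable_one_div_nat_pow.2 one_lt_two).comp_injective PNat.coe_injective
  refine .of_norm_bounded
    (hm.mul_of_nonneg hn (fun _ ↦ by positivity) (fun _ ↦ by positivity)) fun ⟨m, n⟩ ↦ ?_
  have hxle : (m : ℝ) ≤ x m n := by exact_mod_cast hx m n
  have hdle : (x m n : ℝ) ^ 2 * (n : ℝ) ^ 2 ≤ C * d m n := by
    exact_mod_cast hd m n m.pos n.pos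
  have hxpos : 0 < x m n := m.pos.trans_le (hx m n)
  have hxpos' : (0 : ℝ) < x m n := Nat.cast_pos.2 hxpos
  have hdpos : 0 < d m n := by
    refine Nat.pos_of_mul_pos_left ((?_ : 0 < x m n ^ 2 * (n : ℕ) ^ 2).trans_le
      (hd m n m.pos n.pos))
    positivity
  rw [norm_div, norm_one, norm_mul, norm_natCast_cpow_of_pos hxpos, norm_natCast,
    div_mul_div_comm, mul_one, div_le_div_iff₀ (by positivity) (by positivity), one_mul]
  calc (m : ℝ) ^ (s.re + 2) * (n : ℝ) ^ 2
      ≤ (x m n : ℝ) ^ (s.re + 2) * (n : ℝ) ^ 2 := by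
        gcongr
        linarith
    _ = (x m n : ℝ) ^ s.re * ((x m n : ℝ) ^ 2 * (n : ℝ) ^ 2) := by
        rw [Real.rpow_add hxpos', Real.rpow_two, mul_assoc]
    _ ≤ (x m n : ℝ) ^ s.re * (C * d m n) := by gcongr
    _ = C * ((x m n : ℝ) ^ s.re * d m n) := by ring

lemma summable_zetaC2Term_left_three_one_one (hs : -1 < s.re) : Summable (zetaC2Term s 3 1 1) := by
  refine (summable_one_div_cpow_mul hs (C := 1) (x := fun m _ ↦ m)
    (d := fun m n ↦ n ^ 3 * (m + n) * (m + 2 * n)) (fun _ _ ↦ le_rfl) ?_).congr ?_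
  · intro m n _ hn
    calc m ^ 2 * n ^ 2 = n ^ 2 * m * m := by ring
      _ ≤ n ^ 3 * (m + n) * (m + 2 * n) := by gcongr <;> lia
      _ = _ := (one_mul _).symm
  · intro p
    simp [zetaC2Term, mul_assoc]

lemma summable_zetaC2Term_left_one_three_one (hs : -1 < s.re) : Summable (zetaC2Term s 1 3 1) := by
  refine (summable_one_div_cpow_mul hs (C := 1) (x := fun m _ ↦ m)
    (d := fun m n ↦ n * (m + n) ^ 3 * (m + 2 * n)) (fun _ _ ↦ le_rfl) ?_).congr ?_
  · intro m n hm _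
    calc m ^ 2 * n ^ 2 ≤ m ^ 2 * n ^ 2 * (m + n) := Nat.le_mul_of_pos_right _ (by lia)
      _ = n * (m * n * (m + n)) * m := by ring
      _ ≤ n * ((m + n) * (m + n) * (m + n)) * (m + 2 * n) := by gcongr <;> lia
      _ = 1 * (n * (m + n) ^ 3 * (m + 2 * n)) := by ring
  · intro p
    simp [zetaC2Term, mul_assoc]

lemma summable_zetaC2Term_one_one_three_right (hs : -1 < s.re) : Summable (zetaC2Term 1 1 3 s) := by
  refine (summable_one_div_cpow_mul hs (C := 4) (x := fun m n ↦ m + 2 * n)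
    (d := fun m n ↦ m * n * (m + n) ^ 3) (fun _ _ ↦ Nat.le_add_right _ _) ?_).congr ?_
  · intro m n hm _
    calc (m + 2 * n) ^ 2 * n ^ 2 ≤ m * ((m + 2 * n) ^ 2 * n ^ 2) := Nat.le_mul_of_pos_left _ hm
      _ = m * n * ((m + 2 * n) ^ 2 * n) := by ring
      _ ≤ m * n * ((2 * (m + n)) ^ 2 * (m + n)) := by gcongr <;> lia
      _ = 4 * (m * n * (m + n) ^ 3) := by ring
  · intro p
    simp only [zetaC2Term, Nat.cast_add, Nat.cast_mul, Nat.cast_ofNat, Nat.cast_pow, cpow_one,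
      cpow_ofNat, one_div, mul_inv_rev]
    ring

lemma summable_zetaC2Term_one_three_one_right (hs : -1 < s.re) : Summable (zetaC2Term 1 3 1 s) := by
  refine (summable_one_div_cpow_mul hs (C := 6) (x := fun m n ↦ m + 2 * n)
    (d := fun m n ↦ m * n ^ 3 * (m + n)) (fun _ _ ↦ Nat.le_add_right _ _) ?_).congr ?_
  · intro m n hm hn
    have hlinear : m + 2 * n ≤ 3 * (m * n) := by nlinarith
    calc (m + 2 * n) ^ 2 * n ^ 2 = (m + 2 * n) * (m + 2 * n) * n ^ 2 := by ring
      _ ≤ 3 * (m * n) * (2 * (m + n)) * n ^ 2 := by gcongr; lia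
      _ = 6 * (m * n ^ 3 * (m + n)) := by ring
  · intro p
    simp only [zetaC2Term, Nat.cast_add, Nat.cast_mul, Nat.cast_ofNat, Nat.cast_pow, cpow_one,
      cpow_ofNat, one_div, mul_inv_rev]
    ring

lemma zetaC2Term_sub_left_eq_c2Kernel (p : ℕ+ × ℕ+) :
    zetaC2Term s 3 1 1 p - zetaC2Term s 1 3 1 p =
      1 / (p.1 : ℂ) ^ s * (c2Kernel (p.1 : ℂ) p.2 + c2Kernel (p.1 : ℂ) (-p.1 - p.2)) := by
  rw [c2Kernel_neg_sub]
  simp only [zetaC2Term, c2Kernel, cpow_ofNat, cpow_one, one_div, mul_inv]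
  ring

lemma zetaC2Term_sub_right_eq_c2Kernel (p : ℕ+ × ℕ+) :
    zetaC2Term 1 1 3 s p - zetaC2Term 1 3 1 s p =
      1 / ((p.1 : ℂ) + 2 * p.2) ^ s * (c2Kernel ((p.1 : ℂ) + 2 * p.2) (-p.2) +
        c2Kernel ((p.1 : ℂ) + 2 * p.2) (p.2 - (p.1 + 2 * p.2))) := by
  rw [c2Kernel_add_two_mul_neg, c2Kernel_add_two_mul_sub]
  simp only [zetaC2Term, cpow_ofNat, cpow_one, one_div, mul_inv]
  ring

lemma hasSum_one_div_cpow_mul_c2Kernel (hs : -1 < s.re) :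
    HasSum (fun p : ℕ+ × ℕ+ ↦ 1 / (p.1 : ℂ) ^ s *
        (c2Kernel (p.1 : ℂ) p.2 + c2Kernel (p.1 : ℂ) (-p.1 - p.2) +
          if 2 * p.2 < p.1 then c2Kernel (p.1 : ℂ) (-p.2) + c2Kernel (p.1 : ℂ) (p.2 - p.1) else 0))
      (zetaC2 s 3 1 1 - zetaC2 s 1 3 1 + zetaC2 1 1 3 s - zetaC2 1 3 1 s) := by
  have houter := (hasSum_zetaC2Term (summable_zetaC2Term_left_three_one_one hs)).sub
    (hasSum_zetaC2Term (summable_zetaC2Term_left_one_three_one hs))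
  have hinner := (hasSum_zetaC2Term (summable_zetaC2Term_one_one_three_right hs)).sub
    (hasSum_zetaC2Term (summable_zetaC2Term_one_three_one_right hs))
  have hfolded : HasSum (fun p : ℕ+ × ℕ+ ↦ if 2 * p.2 < p.1 then 1 / (p.1 : ℂ) ^ s *
      (c2Kernel (p.1 : ℂ) (-p.2) + c2Kernel (p.1 : ℂ) (p.2 - p.1)) else 0)
      (zetaC2 1 1 3 s - zetaC2 1 3 1 s) := by
    refine hasSum_ite_two_mul_lt_iff.2 (hinner.congr_fun fun p ↦ ?_)
    rw [zetaC2Term_sub_right_eq_c2Kernel]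
    push_cast
    rfl
  rw [add_sub_assoc]
  refine (houter.add hfolded).congr_fun fun p ↦ ?_
  rw [zetaC2Term_sub_left_eq_c2Kernel, mul_add, mul_ite, mul_zero]

lemma hasSum_pnat_one_div_cpow (hs : 1 < s.re) :
    HasSum (fun n : ℕ+ ↦ 1 / (n : ℂ) ^ s) (riemannZeta s) := by
  have hs0 : s ≠ 0 := ne_zero_of_one_lt_re hs
  refine (hasSum_pnat_iff (f := fun n : ℕ ↦ 1 / (n : ℂ) ^ s)).2 ?_
  rw [zeta_eq_tsum_one_div_nat_cpow hs]
  simpa [zero_cpow hs0] using (summable_one_div_nat_cpow.2 hs).hasSum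

lemma hasSum_ite_even_one_div_cpow (hs : 1 < s.re) :
    HasSum (fun n : ℕ+ ↦ if Even (n : ℕ) then 1 / (n : ℂ) ^ s else 0)
      (2 ^ (-s) * riemannZeta s) := by
  refine hasSum_ite_even_iff.2 (((hasSum_pnat_one_div_cpow hs).mul_left _).congr_fun fun n ↦ ?_)
  have hmul := natCast_mul_natCast_cpow 2 n s
  push_cast at hmul ⊢
  rw [hmul, cpow_neg]
  simp [mul_comm]

lemma hasSum_riemannZeta_add_four_add_six (hs : -3 < s.re) :
    HasSum (fun N : ℕ+ ↦ 1 / (N : ℂ) ^ (s + 1) * (-(Real.pi : ℂ) ^ 2 / N ^ 3 + 10 / N ^ 5 +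
        if Even (N : ℕ) then 32 / (N : ℂ) ^ 5 else 0))
      (-(Real.pi : ℂ) ^ 2 * riemannZeta (s + 4) +
        (10 + (2 : ℂ) ^ (-s - 1)) * riemannZeta (s + 6)) := by
  have h4 : 1 < (s + 4).re := by
    rw [add_re, re_ofNat]
    linarith
  have h6 : 1 < (s + 6).re := by
    rw [add_re, re_ofNat]
    linarith
  have htwo : (2 : ℂ) ^ (-s - 1) = 32 * 2 ^ (-(s + 6)) := by
    rw [show -s - 1 = -(s + 6) + (5 : ℕ) by push_cast; ring, cpow_add _ _ two_ne_zero, cpow_natCast]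
    ring
  have hsum := (((hasSum_pnat_one_div_cpow h4).mul_left (-(Real.pi : ℂ) ^ 2)).add
    ((hasSum_pnat_one_div_cpow h6).mul_left 10)).add
    ((hasSum_ite_even_one_div_cpow h6).mul_left 32)
  rw [htwo, add_mul, mul_assoc, ← add_assoc]
  refine hsum.congr_fun fun N ↦ ?_
  have hN : (N : ℂ) ≠ 0 := by exact_mod_cast N.ne_zero
  have hcpow4 : (N : ℂ) ^ (s + 4) = N ^ (s + 1) * N ^ 3 := by
    rw [show s + 4 = s + 1 + (3 : ℕ) by push_cast; ring, cpow_add _ _ hN, cpow_natCast]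
  have hcpow6 : (N : ℂ) ^ (s + 6) = N ^ (s + 1) * N ^ 5 := by
    rw [show s + 6 = s + 1 + (5 : ℕ) by push_cast; ring, cpow_add _ _ hN, cpow_natCast]
  rw [hcpow4, hcpow6]
  simp only [one_div, mul_inv]
  split_ifs <;> ring

end ZetaC2

theorem functional_relation_C2_general {s : ℂ} (hs : -2 < s.re) :
    zetaC2 (s + 1) 3 1 1 - zetaC2 (s + 1) 1 3 1 + zetaC2 1 1 3 (s + 1) -
        zetaC2 1 3 1 (s + 1) =
      -(Real.pi : ℂ) ^ 2 * riemannZeta (s + 4) +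
        (10 + (2 : ℂ) ^ (-s - 1)) * riemannZeta (s + 6) := by
  have hs' : -1 < (s + 1).re := by
    rw [add_re, one_re]
    linarith
  have hdouble := hasSum_one_div_cpow_mul_c2Kernel hs'
  have hrow := fun N : ℕ+ ↦ (hasSum_pnat_c2Kernel N).mul_left (1 / (N : ℂ) ^ (s + 1))
  exact (hdouble.prod_fiberwise hrow).unique (hasSum_riemannZeta_add_four_add_six (by linarith))

theorem functional_relation_C2 (s : ℂ) (hs : 1 < s.re) :
    zetaC2 (s + 1) 3 1 1 - zetaC2 (s + 1) 1 3 1 + zetaC2 1 1 3 (s + 1) -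
        zetaC2 1 3 1 (s + 1) =
      -(Real.pi : ℂ) ^ 2 * riemannZeta (s + 4) +
        (10 + (2 : ℂ) ^ (-s - 1)) * riemannZeta (s + 6) :=
  functional_relation_C2_general (by linarith)
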